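/- Let γ be an admissible curve in G¹₃ with ε = +1 whose equiform curvature 𝒦 is identically zero and whose equiform torsion 𝒯 is a nonzero constant (an equiform Bertrand curve / circular helix). Then: (a) 𝒯° − 3𝒦𝒯 ≡ 0 and the AW(3) identity ⟨Q₁(x),Q₁(x)⟩·Q₃(x) = ⟨Q₃(x),Q₁(x)⟩·Q₁(x) holds for all x, so γ is of equiform AW(3)-type; (b) Q₃(x) ≠ 0 for all x, so γ is not of equiform AW(1)-type; (c) ⟨Q₂(x),Q₂(x)⟩·Q₃(x) ≠ ⟨Q₃(x),Q₂(x)⟩·Q₂(x) for all x, so γ is not of equiform AW(2)-type. -/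

import Mathlib

noncomputable section

open Real

/-- Model of the pseudo-Galilean space `G¹₃` as `ℝ³`. -/
abbrev V3 := ℝ × ℝ × ℝ

/-- The pseudo-Galilean scalar product on `ℝ³`. -/
def pgInner (u v : V3) : ℝ :=
  if u.1 ≠ 0 ∨ v.1 ≠ 0 then u.1 * v.1 else u.2.1 * v.2.1 - u.2.2 * v.2.2

/-- Curvature of the admissible curve `x ↦ (x, y x, z x)`. -/
def curv (y z : ℝ → ℝ) (x : ℝ) : ℝ :=
  Real.sqrt |(deriv (deriv y) x) ^ 2 - (deriv (deriv z) x) ^ 2|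

/-- Torsion of the admissible curve `x ↦ (x, y x, z x)`. -/
def tors (y z : ℝ → ℝ) (x : ℝ) : ℝ :=
  (deriv (deriv y) x * deriv (deriv (deriv z)) x -
    deriv (deriv (deriv y)) x * deriv (deriv z) x) / (curv y z x) ^ 2

/-- Radius of curvature `ρ = 1/κ`. -/
def rho (y z : ℝ → ℝ) (x : ℝ) : ℝ := 1 / curv y z x

/-- Equiform curvature `𝒦 = ρ'`. -/
def eqK (y z : ℝ → ℝ) (x : ℝ) : ℝ := deriv (rho y z) x

/-- Equiform torsion `𝒯 = ρ·τ`. -/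
def eqT (y z : ℝ → ℝ) (x : ℝ) : ℝ := rho y z x * tors y z x

/-- Frenet tangent `e₁ = (1, y', z')`. -/
def e1 (y z : ℝ → ℝ) (x : ℝ) : V3 := (1, deriv y x, deriv z x)

/-- Frenet principal normal `e₂ = (1/κ)(0, y'', z'')`. -/
def e2 (y z : ℝ → ℝ) (x : ℝ) : V3 :=
  (0, deriv (deriv y) x / curv y z x, deriv (deriv z) x / curv y z x)

/-- Frenet binormal `e₃ = (1/κ)(0, ε·z'', ε·y'')`. -/
def e3 (y z : ℝ → ℝ) (ε : ℝ) (x : ℝ) : V3 :=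
  (0, ε * deriv (deriv z) x / curv y z x, ε * deriv (deriv y) x / curv y z x)

/-- Equiform tangent `T = ρ·e₁`. -/
def Tv (y z : ℝ → ℝ) (x : ℝ) : V3 := rho y z x • e1 y z x

/-- Equiform principal normal `N = ρ·e₂`. -/
def Nv (y z : ℝ → ℝ) (x : ℝ) : V3 := rho y z x • e2 y z x

/-- Equiform binormal `B = ρ·e₃`. -/
def Bv (y z : ℝ → ℝ) (ε : ℝ) (x : ℝ) : V3 := rho y z x • e3 y z ε x

/-- Derivative with respect to the equiform parameter: `f° = ρ·f'`. -/
def eqD {E : Type*} [NormedAddCommGroup E] [NormedSpace ℝ E]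
    (y z : ℝ → ℝ) (f : ℝ → E) (x : ℝ) : E := rho y z x • deriv f x

/-- `Q₁ = ρ⁻²·N`. -/
def Q1 (y z : ℝ → ℝ) (x : ℝ) : V3 := ((rho y z x) ^ (-2 : ℤ)) • Nv y z x

/-- `Q₂ = ρ⁻³·(−𝒦N + 𝒯B)`. -/
def Q2 (y z : ℝ → ℝ) (ε : ℝ) (x : ℝ) : V3 :=
  ((rho y z x) ^ (-3 : ℤ)) • ((-(eqK y z x)) • Nv y z x + (eqT y z x) • Bv y z ε x)

/-- `Q₃ = ρ⁻⁴·[(2𝒦² + 𝒯² − 𝒦°)N + (𝒯° − 3𝒦𝒯)B]`. -/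
def Q3 (y z : ℝ → ℝ) (ε : ℝ) (x : ℝ) : V3 :=
  ((rho y z x) ^ (-4 : ℤ)) •
    ((2 * (eqK y z x) ^ 2 + (eqT y z x) ^ 2 - eqD y z (eqK y z) x) • Nv y z x +
      (eqD y z (eqT y z) x - 3 * eqK y z x * eqT y z x) • Bv y z ε x)

/-!
When `𝒦 ≡ 0` and `𝒯` is constant, `Q₁`, `Q₂`, `Q₃` are multiples of `N`, `B`, `N`
respectively, with nonzero coefficients if `𝒯 ≠ 0`. As `N` and `B` are orthogonal and non-null,
`Q₃` is a nonzero multiple of `Q₁`, which gives AW(3) and excludes AW(1); and `Q₃` is orthogonal to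
the non-null vector `Q₂`, so the AW(2) identity would read `⟨Q₂, Q₂⟩ Q₃ = 0`.
-/

section ScalarProduct

theorem pgInner_comm (u v : V3) : pgInner u v = pgInner v u := by
  simp only [pgInner, or_comm, mul_comm]

theorem pgInner_smul_left (a : ℝ) (u v : V3) : pgInner (a • u) v = a * pgInner u v := by
  rcases eq_or_ne a 0 with rfl | ha
  · simp [pgInner]
  · simp only [pgInner, Prod.smul_fst, Prod.smul_snd, smul_eq_mul, mul_ne_zero_iff_left ha]
    split_ifs <;> ring

theorem pgInner_smul_right (a : ℝ) (u v : V3) : pgInner u (a • v) = a * pgInner u v := by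
  rw [pgInner_comm, pgInner_smul_left, pgInner_comm]

theorem ne_zero_of_pgInner_self_ne_zero {u : V3} (hu : pgInner u u ≠ 0) : u ≠ 0 := by
  rintro rfl
  simp [pgInner] at hu

theorem pgInner_self_smul_smul (a : ℝ) (u : V3) :
    pgInner u u • a • u = pgInner (a • u) u • u := by
  rw [pgInner_smul_left, smul_smul, mul_comm]

theorem pgInner_self_smul_ne_of_pgInner_eq_zero {u v : V3} (hu : u ≠ 0) (hv : pgInner v v ≠ 0)
    (huv : pgInner u v = 0) : pgInner v v • u ≠ pgInner u v • v := by
  rw [huv, zero_smul]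
  exact smul_ne_zero hv hu

end ScalarProduct

section Frame

variable {y z : ℝ → ℝ} {ε x : ℝ}

theorem rho_ne_zero (hΔ : deriv (deriv y) x ^ 2 - deriv (deriv z) x ^ 2 ≠ 0) :
    rho y z x ≠ 0 :=
  one_div_ne_zero (Real.sqrt_ne_zero'.2 (abs_pos.2 hΔ))

theorem pgInner_Nv_self :
    pgInner (Nv y z x) (Nv y z x) =
      rho y z x ^ 4 * (deriv (deriv y) x ^ 2 - deriv (deriv z) x ^ 2) := by
  simp only [pgInner, Nv, e2, rho, Prod.smul_mk, smul_eq_mul, mul_zero, ne_eq,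
    not_true_eq_false, or_self, if_false]
  ring

theorem pgInner_Bv_self :
    pgInner (Bv y z ε x) (Bv y z ε x) = -(ε ^ 2 * pgInner (Nv y z x) (Nv y z x)) := by
  simp only [pgInner, Nv, Bv, e2, e3, Prod.smul_mk, smul_eq_mul, mul_zero, ne_eq,
    not_true_eq_false, or_self, if_false]
  ring

theorem pgInner_Nv_Bv : pgInner (Nv y z x) (Bv y z ε x) = 0 := by
  simp only [pgInner, Nv, Bv, e2, e3, Prod.smul_mk, smul_eq_mul, mul_zero, ne_eq,
    not_true_eq_false, or_self, if_false]
  ring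

theorem pgInner_Nv_self_ne_zero (hΔ : deriv (deriv y) x ^ 2 - deriv (deriv z) x ^ 2 ≠ 0) :
    pgInner (Nv y z x) (Nv y z x) ≠ 0 := by
  rw [pgInner_Nv_self]
  exact mul_ne_zero (pow_ne_zero 4 (rho_ne_zero hΔ)) hΔ

theorem pgInner_Bv_self_ne_zero (hε : ε ≠ 0)
    (hΔ : deriv (deriv y) x ^ 2 - deriv (deriv z) x ^ 2 ≠ 0) :
    pgInner (Bv y z ε x) (Bv y z ε x) ≠ 0 := by
  rw [pgInner_Bv_self]
  exact neg_ne_zero.2 (mul_ne_zero (pow_ne_zero 2 hε) (pgInner_Nv_self_ne_zero hΔ))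

theorem eqD_eq_zero_of_eqOn_const {E : Type*} [NormedAddCommGroup E] [NormedSpace ℝ E]
    {f : ℝ → E} {I : Set ℝ} {c : E} (hI : IsOpen I) (hx : x ∈ I) (hf : ∀ t ∈ I, f t = c) :
    eqD y z f x = 0 := by
  have h : f =ᶠ[nhds x] fun _ => c := Filter.eventually_of_mem (hI.mem_nhds hx) hf
  rw [eqD, h.deriv_eq, deriv_const, smul_zero]

theorem Q2_of_eqK_eq_zero (hK : eqK y z x = 0) :
    Q2 y z ε x = (rho y z x ^ (-3 : ℤ) * eqT y z x) • Bv y z ε x := by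
  rw [Q2, hK, neg_zero, zero_smul, zero_add, smul_smul]

theorem Q3_of_eqK_eq_zero (hK : eqK y z x = 0) (hK' : eqD y z (eqK y z) x = 0)
    (hT' : eqD y z (eqT y z) x = 0) :
    Q3 y z ε x = (eqT y z x / rho y z x) ^ 2 • Q1 y z x := by
  have hQ3 : Q3 y z ε x = rho y z x ^ (-4 : ℤ) • eqT y z x ^ 2 • Nv y z x := by
    simp only [Q3, hK, hK', hT', ne_eq, OfNat.ofNat_ne_zero, not_false_eq_true, zero_pow,
      mul_zero, zero_mul, zero_add, sub_zero, zero_smul, add_zero]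
  rw [hQ3, Q1, smul_smul, smul_smul]
  congr 1
  field_simp

theorem pgInner_Q1_Q2_of_eqK_eq_zero (hK : eqK y z x = 0) :
    pgInner (Q1 y z x) (Q2 y z ε x) = 0 := by
  rw [Q2_of_eqK_eq_zero hK, Q1, pgInner_smul_left, pgInner_smul_right, pgInner_Nv_Bv, mul_zero,
    mul_zero]

theorem Q1_ne_zero (hΔ : deriv (deriv y) x ^ 2 - deriv (deriv z) x ^ 2 ≠ 0) : Q1 y z x ≠ 0 :=
  smul_ne_zero (zpow_ne_zero _ (rho_ne_zero hΔ))
    (ne_zero_of_pgInner_self_ne_zero (pgInner_Nv_self_ne_zero hΔ))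

theorem pgInner_Q2_self_ne_zero (hε : ε ≠ 0)
    (hΔ : deriv (deriv y) x ^ 2 - deriv (deriv z) x ^ 2 ≠ 0)
    (hK : eqK y z x = 0) (hT : eqT y z x ≠ 0) :
    pgInner (Q2 y z ε x) (Q2 y z ε x) ≠ 0 := by
  have ha : rho y z x ^ (-3 : ℤ) * eqT y z x ≠ 0 :=
    mul_ne_zero (zpow_ne_zero _ (rho_ne_zero hΔ)) hT
  rw [Q2_of_eqK_eq_zero hK, pgInner_smul_left, pgInner_smul_right]
  exact mul_ne_zero ha (mul_ne_zero ha (pgInner_Bv_self_ne_zero hε hΔ))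

end Frame

/-- Since `Real.sign 0 = 0`, the hypothesis `ε ≠ 0` encodes admissibility of the curve. -/
theorem pg_bertrand_AW_types_general (I : Set ℝ) (y z : ℝ → ℝ) (ε c : ℝ)
    (hI : IsOpen I) (_hy : ContDiffOn ℝ 3 y I) (_hz : ContDiffOn ℝ 3 z I) (hε : ε ≠ 0)
    (hsign : ∀ x ∈ I, Real.sign (deriv (deriv y) x ^ 2 - deriv (deriv z) x ^ 2) = ε)
    (hc : c ≠ 0) (hK : ∀ x ∈ I, eqK y z x = 0) (hT : ∀ x ∈ I, eqT y z x = c) :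
    ∀ x ∈ I,
      (eqD y z (eqT y z) x - 3 * eqK y z x * eqT y z x = 0 ∧
        pgInner (Q1 y z x) (Q1 y z x) • Q3 y z ε x =
          pgInner (Q3 y z ε x) (Q1 y z x) • Q1 y z x) ∧
      Q3 y z ε x ≠ 0 ∧
      pgInner (Q2 y z ε x) (Q2 y z ε x) • Q3 y z ε x ≠
        pgInner (Q3 y z ε x) (Q2 y z ε x) • Q2 y z ε x := by
  intro x hx
  have hΔ : deriv (deriv y) x ^ 2 - deriv (deriv z) x ^ 2 ≠ 0 :=
    mt Real.sign_eq_zero_iff.2 (hsign x hx ▸ hε)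
  have hTx : eqT y z x ≠ 0 := hT x hx ▸ hc
  have hK' : eqD y z (eqK y z) x = 0 := eqD_eq_zero_of_eqOn_const hI hx hK
  have hT' : eqD y z (eqT y z) x = 0 := eqD_eq_zero_of_eqOn_const hI hx hT
  have hQ3 : Q3 y z ε x = (eqT y z x / rho y z x) ^ 2 • Q1 y z x :=
    Q3_of_eqK_eq_zero (hK x hx) hK' hT'
  have hQ3_ne : Q3 y z ε x ≠ 0 :=
    hQ3 ▸ smul_ne_zero (pow_ne_zero 2 (div_ne_zero hTx (rho_ne_zero hΔ))) (Q1_ne_zero hΔ)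
  have hQ32 : pgInner (Q3 y z ε x) (Q2 y z ε x) = 0 := by
    rw [hQ3, pgInner_smul_left, pgInner_Q1_Q2_of_eqK_eq_zero (hK x hx), mul_zero]
  refine ⟨⟨?_, ?_⟩, hQ3_ne, ?_⟩
  · rw [hT', hK x hx, mul_zero, zero_mul, sub_zero]
  · rw [hQ3, pgInner_self_smul_smul]
  · exact pgInner_self_smul_ne_of_pgInner_eq_zero hQ3_ne
      (pgInner_Q2_self_ne_zero hε hΔ (hK x hx) hTx) hQ32

/-- an equiform Bertrand curve / circular helix (`𝒦 ≡ 0`, `𝒯` a nonzero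
constant, `ε = +1`) is of equiform AW(3)-type, but neither of equiform AW(1)- nor of
equiform AW(2)-type. -/
theorem pg_bertrand_AW_types (I : Set ℝ) (y z : ℝ → ℝ) (c : ℝ)
    (hI : IsOpen I) (hy : ContDiff ℝ (⊤ : ℕ∞) y) (hz : ContDiff ℝ (⊤ : ℕ∞) z)
    (hsign : ∀ x ∈ I, 0 < (deriv (deriv y) x) ^ 2 - (deriv (deriv z) x) ^ 2)
    (hc : c ≠ 0) (hK : ∀ x ∈ I, eqK y z x = 0) (hT : ∀ x ∈ I, eqT y z x = c) :
    ∀ x ∈ I,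
      (eqD y z (eqT y z) x - 3 * eqK y z x * eqT y z x = 0 ∧
        (pgInner (Q1 y z x) (Q1 y z x)) • Q3 y z 1 x =
          (pgInner (Q3 y z 1 x) (Q1 y z x)) • Q1 y z x) ∧
      Q3 y z 1 x ≠ 0 ∧
      (pgInner (Q2 y z 1 x) (Q2 y z 1 x)) • Q3 y z 1 x ≠
        (pgInner (Q3 y z 1 x) (Q2 y z 1 x)) • Q2 y z 1 x :=
  pg_bertrand_AW_types_general I y z 1 c hI (contDiff_infty.1 hy 3).contDiffOn
    (contDiff_infty.1 hz 3).contDiffOn one_ne_zero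
    (fun x hx => Real.sign_of_pos (hsign x hx)) hc hK hT
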